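/- arXiv:1303.5037 — 2 statements merged into one kernel-verified Lean document; each statement's English description precedes it below -/
import Mathlib

section
/- Let A and B be separable unital UHF algebras with associated supernatural numbers s and t. If there is a unital embedding of A into B then s divides t. In particular, for primes p, if M_p(ℂ) embeds unitally into B, then p divides the supernatural number of B. -/
/-!
A unital copy of `M_k(ℂ)` in `B` forces `k ∣ kB n` for some `n`; applied to the matrix subalgebras
of `A`, and to `M_p(ℂ)` itself, this gives both claims.

Let `e i j` be the matrix units in `B`, and put `q = e 0 0`, `v i = e i 0`, `v' i = e 0 i`. By
density, `v` and `v'` are approximated by tuples `w`, `w'` in some `SB n`; by continuous functional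
calculus in `SB n`, `q` is approximated by an idempotent `p` of `SB n`
(`exists_idempotent_mem_near`). Since `u = ∑ j, w j * p * w' j` is close to `1`, it has an inverse
`c` in `SB n`. Then `G i j = p * w' i * c * w j * p` is an idempotent matrix below the diagonal
matrix with entries `p`, and close to it. Their difference is an idempotent matrix of small norm,
hence zero (`entries_eq_of_norm_lt`): the approximate matrix units have become exact. Taking traces
in `SB n ≅ M_{kB n}(ℂ)`, the relations `∑ j, w j * p * w' j * c = 1` and `p * w' j * c * w j * p = p`
yield `kB n = k * tr p`, and `tr p` is a natural number, the rank of `p`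
(`dvd_of_matrix_units`).
-/

open scoped ENNReal

/-! ### Idempotents near a projection -/

/-- An almost idempotent self-adjoint element is close to an idempotent: its spectrum avoids
`1/2`, so the spectral projection of `(1/2, ∞)` is given by continuous functional calculus. -/
theorem exists_idempotent_near {C : Type*} [CStarAlgebra C] (a : C) (ha : IsSelfAdjoint a)
    {δ : ℝ} (hδ : δ < 1 / 4) (h : ‖a * a - a‖ ≤ δ) :
    ∃ p : C, p * p = p ∧ ‖p - a‖ ≤ 2 * δ := by
  have hδ0 : 0 ≤ δ := (norm_nonneg _).trans h
  have hspec : ∀ x ∈ spectrum ℝ a, |x * x - x| ≤ δ := by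
    intro x hx
    have h1 := norm_apply_le_norm_cfc (fun x : ℝ => x * x - x) a hx
    have h2 : cfc (fun x : ℝ => x * x - x) a = a * a - a := by
      rw [cfc_sub (fun x : ℝ => x * x) (fun x => x) a,
        cfc_mul (fun x : ℝ => x) (fun x => x) a, cfc_id' ℝ a]
    rw [h2] at h1
    exact (Real.norm_eq_abs _ ▸ h1).trans h
  set f : ℝ → ℝ := fun x => if 1 / 2 < x then 1 else 0 with hf
  have hcont : ContinuousOn f (spectrum ℝ a) := by
    intro x hx
    apply ContinuousAt.continuousWithinAt
    have hne : x ≠ 1 / 2 := by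
      rintro rfl
      have := hspec _ hx
      norm_num [abs_of_neg] at this
      linarith
    rcases lt_or_gt_of_ne hne with hlt | hgt
    · refine (continuousAt_const (y := (0 : ℝ))).congr ?_
      filter_upwards [Iio_mem_nhds hlt] with y hy
      simp only [hf, if_neg (not_lt.2 (le_of_lt (Set.mem_Iio.1 hy)))]
    · refine (continuousAt_const (y := (1 : ℝ))).congr ?_
      filter_upwards [Ioi_mem_nhds hgt] with y hy
      simp only [hf, if_pos (Set.mem_Ioi.1 hy)]
  refine ⟨cfc f a, ?_, ?_⟩
  · rw [← cfc_mul f f a hcont hcont]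
    congr 1
    funext x
    simp only [hf]
    split_ifs <;> simp
  · have h2 : cfc f a - a = cfc (fun x => f x - x) a := by
      rw [cfc_sub f (fun x => x) a hcont, cfc_id' ℝ a]
    rw [h2]
    refine norm_cfc_le (by positivity) fun x hx => ?_
    have hx' := hspec x hx
    rw [show x * x - x = x * (x - 1) by ring, abs_mul] at hx'
    rw [Real.norm_eq_abs]
    simp only [hf]
    split_ifs with hlt
    · rw [abs_sub_comm]
      have : 1 / 2 ≤ |x| := hlt.le.trans (le_abs_self x)
      nlinarith [abs_nonneg (x - 1)]
    · have : 1 / 2 ≤ |x - 1| := by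
        rw [abs_sub_comm]
        exact le_trans (by linarith) (le_abs_self (1 - x))
      rw [zero_sub, abs_neg]
      nlinarith [abs_nonneg x]

/-- A projection of `B` is a limit of idempotents of the dense union. Self-adjointness of the
approximants is arranged by passing to real parts, which stay in the subalgebra. -/
theorem exists_idempotent_mem_near {B : Type*} [CStarAlgebra B] (S : ℕ → StarSubalgebra ℂ B)
    (hclosed : ∀ n, IsClosed (S n : Set B)) (hdense : Dense (⋃ n, (S n : Set B)))
    (q : B) (hq : q * q = q) (hqs : star q = q) :
    q ∈ closure {p : B | p * p = p ∧ p ∈ ⋃ n, (S n : Set B)} := by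
  rw [Metric.mem_closure_iff]
  intro ε hε
  let r : B → B := fun b => (1 / 2 : ℂ) • (b + star b)
  have hr : Continuous r := by fun_prop
  have hrq : r q = q := by
    simp only [r, hqs, ← two_smul ℂ q, smul_smul]
    norm_num
  have h1 : ∀ᶠ b in nhds q, ‖r b * r b - r b‖ < min (1 / 8) (ε / 8) := by
    have : Continuous fun b => ‖r b * r b - r b‖ := by fun_prop
    refine this.continuousAt.eventually_lt continuousAt_const ?_
    rw [hrq, hq, sub_self, norm_zero]
    positivity
  have h2 : ∀ᶠ b in nhds q, ‖q - r b‖ < ε / 2 := by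
    have : Continuous fun b => ‖q - r b‖ := by fun_prop
    refine this.continuousAt.eventually_lt continuousAt_const ?_
    rw [hrq, sub_self, norm_zero]
    positivity
  obtain ⟨b, hb, hb1, hb2⟩ := ((mem_closure_iff_frequently.1 (hdense q)).and_eventually
    (h1.and h2)).exists
  obtain ⟨n, hn⟩ := Set.mem_iUnion.1 hb
  have := hclosed n
  have hmem : r b ∈ S n := (S n).smul_mem (add_mem hn (star_mem hn)) _
  have hsa : star (r b) = r b := by
    simp [r, add_comm]
  obtain ⟨p, hp, hpa⟩ := exists_idempotent_near (C := S n) ⟨r b, hmem⟩ (Subtype.ext hsa)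
    (δ := min (1 / 8) (ε / 8)) ((min_le_left _ _).trans_lt (by norm_num)) hb1.le
  refine ⟨p, ⟨congrArg Subtype.val hp, Set.mem_iUnion.2 ⟨n, p.2⟩⟩, ?_⟩
  have hpa' : ‖(p : B) - r b‖ ≤ 2 * min (1 / 8) (ε / 8) := hpa
  have h3 : min (1 / 8) (ε / 8) ≤ ε / 8 := min_le_right _ _
  rw [dist_eq_norm]
  calc ‖q - p‖ = ‖(q - r b) - (p - r b)‖ := by congr 1; abel
    _ ≤ ‖q - r b‖ + ‖(p : B) - r b‖ := norm_sub_le _ _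
    _ < ε := by linarith

/-! ### Traces and exact matrix units -/

/-- The trace of an idempotent complex matrix is its rank. -/
theorem trace_idempotent_eq_natCast {N : ℕ} (P : Matrix (Fin N) (Fin N) ℂ) (hP : P * P = P) :
    ∃ m : ℕ, P.trace = m := by
  have h : IsIdempotentElem (Matrix.toLin' P) := by
    rw [IsIdempotentElem, Module.End.mul_eq_comp, ← Matrix.toLin'_mul, hP]
  exact ⟨_, (Matrix.trace_toLin'_eq P).symm.trans
    (LinearMap.IsIdempotentElem.isProj_range _ h).trace⟩

/-- Exact matrix units over the corner of an idempotent `p` make `N = k * tr p`. -/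
theorem dvd_of_matrix_units {R : Type*} [Ring R] [Algebra ℂ R] {k N : ℕ}
    (φ : R →ₐ[ℂ] Matrix (Fin N) (Fin N) ℂ) (w w' : Fin k → R) (p c : R) (hp : p * p = p)
    (h1 : (∑ j, w j * p * w' j) * c = 1) (h2 : ∀ j, p * w' j * c * w j * p = p) : k ∣ N := by
  obtain ⟨m, hm⟩ := trace_idempotent_eq_natCast (φ p) (by rw [← map_mul, hp])
  have h3 : (φ 1).trace = k * m := by
    have key : ∀ j, (φ (w j * p * w' j * c)).trace = m := by
      intro j
      have e1 : w j * p * w' j * c = (w j * p) * (p * w' j * c) := by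
        rw [← mul_assoc (w j * p), ← mul_assoc (w j * p), mul_assoc (w j) p p, hp]
      rw [e1, map_mul, Matrix.trace_mul_comm, ← map_mul, ← mul_assoc, h2, hm]
    rw [← h1, Finset.sum_mul, map_sum, Matrix.trace_sum, Finset.sum_congr rfl fun j _ => key j]
    simp
  rw [map_one, Matrix.trace_one, Fintype.card_fin] at h3
  exact ⟨m, by exact_mod_cast h3⟩

/-- If `c` is a right inverse of `∑ j, w j * p * w' j`, the matrix with entries
`G i j = p * w' i * c * w j * p` equals the diagonal matrix with entries `p` as soon
as it is close to it: the difference is an idempotent matrix whose entries have norms summing to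
less than one. -/
theorem entries_eq_of_norm_lt {R : Type*} [NormedRing R] {k : ℕ}
    (w w' : Fin k → R) (p c : R) (hp : p * p = p)
    (h1 : (∑ j, w j * p * w' j) * c = 1)
    (h2 : ∑ i, ∑ j, ‖(if i = j then p else 0) - p * w' i * c * w j * p‖ < 1) (i j : Fin k) :
    (if i = j then p else 0) = p * w' i * c * w j * p := by
  let P : Matrix (Fin k) (Fin k) R := Matrix.diagonal fun _ => p
  let G : Matrix (Fin k) (Fin k) R := Matrix.of fun i j => p * w' i * c * w j * p
  have hPP : P * P = P := by simp [P, hp]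
  have hPG : P * G = G := by
    ext i j
    simp only [P, G, Matrix.diagonal_mul, Matrix.of_apply, ← mul_assoc, hp]
  have hGP : G * P = G := by
    ext i j
    simp only [P, G, Matrix.mul_diagonal, Matrix.of_apply, mul_assoc, hp]
  have hGG : G * G = G := by
    ext i j
    simp only [G, Matrix.mul_apply, Matrix.of_apply]
    calc ∑ l, p * w' i * c * w l * p * (p * w' l * c * w j * p)
        = ∑ l, (p * w' i * c) * (w l * p * w' l * c) * (w j * p) := by
          refine Finset.sum_congr rfl fun l _ => ?_
          have : p * (p * w' l * c * w j * p) = p * w' l * c * w j * p := by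
            simp only [← mul_assoc, hp]
          rw [mul_assoc _ p, this]
          simp only [mul_assoc]
      _ = p * w' i * c * w j * p := by
          rw [← Finset.sum_mul, ← Finset.mul_sum, ← Finset.sum_mul, h1]
          simp only [mul_assoc, one_mul]
  have hF : (P - G) * (P - G) = P - G := by
    rw [sub_mul, mul_sub, mul_sub, hPP, hPG, hGP, hGG]
    abel
  let F := P - G
  have hFe : ∀ i j, F i j = (if i = j then p else 0) - p * w' i * c * w j * p := by
    intro i j
    simp [F, P, G, Matrix.diagonal_apply]
  simp only [← hFe] at h2
  -- Row sums of the norms satisfy `s i ≤ s i * σ`, where `σ < 1` is the total sum.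
  set s : Fin k → ℝ := fun i => ∑ j, ‖F i j‖ with hs
  have hs0 : ∀ i, 0 ≤ s i := fun i => Finset.sum_nonneg fun j _ => norm_nonneg _
  have hsi : s i ≤ s i * ∑ l, s l := by
    calc s i = ∑ j, ‖∑ l, F i l * F l j‖ := by
          simp only [hs]
          refine Finset.sum_congr rfl fun j _ => ?_
          rw [← Matrix.mul_apply, hF]
      _ ≤ ∑ j, ∑ l, ‖F i l‖ * ‖F l j‖ := Finset.sum_le_sum fun j _ =>
          (norm_sum_le _ _).trans (Finset.sum_le_sum fun l _ => norm_mul_le _ _)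
      _ = ∑ l, ‖F i l‖ * s l := by
          rw [Finset.sum_comm]
          simp only [hs, Finset.mul_sum]
      _ ≤ ∑ l, ‖F i l‖ * ∑ l, s l := Finset.sum_le_sum fun l _ =>
          mul_le_mul_of_nonneg_left
            (Finset.single_le_sum (fun l _ => hs0 l) (Finset.mem_univ l)) (norm_nonneg _)
      _ = s i * ∑ l, s l := by rw [← Finset.sum_mul]
  have hzero : s i = 0 := by nlinarith [hs0 i]
  have hij : F i j = 0 := norm_eq_zero.1
    ((Finset.sum_eq_zero_iff_of_nonneg fun j _ => norm_nonneg _).1 hzero j (Finset.mem_univ j))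
  rw [hFe] at hij
  exact sub_eq_zero.1 hij

/-! ### Matrix algebras in the limit algebra -/

/-- A unital copy of `M_k(ℂ)` in the limit algebra forces `k` to divide one of the matrix sizes. -/
theorem exists_dvd_of_hom {B : Type*} [CStarAlgebra B] (S : ℕ → StarSubalgebra ℂ B)
    (hmono : Monotone S) (kB : ℕ → ℕ)
    (hB : ∀ n, Nonempty ((S n) ≃⋆ₐ[ℂ] Matrix (Fin (kB n)) (Fin (kB n)) ℂ))
    (hdense : Dense (⋃ n, (S n : Set B))) {k : ℕ} (hk : 0 < k)
    (g : Matrix (Fin k) (Fin k) ℂ →⋆ₐ[ℂ] B) : ∃ n, k ∣ kB n := by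
  have hclosed : ∀ n, IsClosed (S n : Set B) := by
    intro n
    obtain ⟨e⟩ := hB n
    have : FiniteDimensional ℂ (S n) :=
      Module.Finite.equiv e.toAlgEquiv.toLinearEquiv.symm
    have : FiniteDimensional ℂ (Subalgebra.toSubmodule (S n).toSubalgebra) :=
      inferInstanceAs (FiniteDimensional ℂ (S n))
    exact (Subalgebra.toSubmodule (S n).toSubalgebra).closed_of_finiteDimensional
  let o : Fin k := ⟨0, hk⟩
  let e : Fin k → Fin k → B := fun i j => g (Matrix.single i j 1)
  have hee : ∀ i j l, e i j * e j l = e i l := fun i j l => by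
    simp only [e, ← map_mul, Matrix.single_mul_single_same, mul_one]
  have hee0 : ∀ i j j' l, j ≠ j' → e i j * e j' l = 0 := fun i j j' l h => by
    simp only [e, ← map_mul, Matrix.single_mul_single_of_ne _ _ _ _ h, map_zero]
  have hsum : ∑ i, e i i = 1 := by
    simp only [e, ← map_sum]
    rw [← map_one g]
    congr 1
    ext i j
    simp [Matrix.sum_apply, Matrix.single_apply, Matrix.one_apply, ite_and]
  have hstar : star (e o o) = e o o := by
    simp only [e, ← map_star, Matrix.star_eq_conjTranspose, Matrix.conjTranspose_single, star_one]
  let x₀ : (Fin k → B) × (Fin k → B) × B := (fun i => e i o, fun i => e o i, e o o)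
  let u : (Fin k → B) × (Fin k → B) × B → B := fun x => ∑ j, x.1 j * x.2.2 * x.2.1 j
  let Φ : (Fin k → B) × (Fin k → B) × B → ℝ := fun x => ∑ i, ∑ j, ‖(if i = j then x.2.2 else 0) -
    x.2.2 * x.2.1 i * Ring.inverse (u x) * x.1 j * x.2.2‖
  have hu : Continuous u := by fun_prop
  have hu₀ : u x₀ = 1 := by simp only [u, x₀, hee, hsum]
  have hinv : ContinuousAt (fun x => Ring.inverse (u x)) x₀ := by
    have h1 : ContinuousAt (Ring.inverse : B → B) (u x₀) := by
      rw [hu₀]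
      exact NormedRing.inverse_continuousAt (1 : Bˣ)
    exact h1.comp hu.continuousAt
  have hΦ : ContinuousAt Φ x₀ := by
    refine tendsto_finsetSum _ fun i _ => tendsto_finsetSum _ fun j _ => ?_
    have h1 : ContinuousAt (fun x : (Fin k → B) × (Fin k → B) × B =>
        if i = j then x.2.2 else 0) x₀ := by
      split_ifs <;> fun_prop
    have h2 : ContinuousAt (fun x : (Fin k → B) × (Fin k → B) × B => x.2.2 * x.2.1 i) x₀ := by fun_prop
    have h3 : ContinuousAt (fun x : (Fin k → B) × (Fin k → B) × B => x.1 j) x₀ := by fun_prop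
    have h4 : ContinuousAt (fun x : (Fin k → B) × (Fin k → B) × B => x.2.2) x₀ := by fun_prop
    exact (h1.sub (((h2.mul hinv).mul h3).mul h4)).norm
  have hΦ₀ : Φ x₀ = 0 := by
    refine Finset.sum_eq_zero fun i _ => Finset.sum_eq_zero fun j _ => ?_
    rw [hu₀, Ring.inverse_one, norm_eq_zero, sub_eq_zero]
    simp only [x₀, mul_one, hee]
    split_ifs with hij
    · subst hij
      simp only [hee]
    · rw [hee0 _ _ _ _ hij, zero_mul]
  have hev : ∀ᶠ x in nhds x₀, Φ x < 1 ∧ ‖1 - u x‖ < 1 := by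
    refine (hΦ.eventually_lt continuousAt_const (by rw [hΦ₀]; exact one_pos)).and ?_
    have : Continuous fun x => ‖1 - u x‖ := by fun_prop
    refine this.continuousAt.eventually_lt continuousAt_const ?_
    rw [hu₀, sub_self, norm_zero]
    exact one_pos
  let D : Set B := ⋃ n, (S n : Set B)
  have hx₀ : x₀ ∈ closure ((Set.univ.pi fun _ => D) ×ˢ (Set.univ.pi fun _ => D) ×ˢ
      {p : B | p * p = p ∧ p ∈ D}) := by
    rw [closure_prod_eq, closure_prod_eq, closure_pi_set]
    exact ⟨fun i _ => hdense _, fun i _ => hdense _,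
      exists_idempotent_mem_near S hclosed hdense _ (hee o o o) hstar⟩
  obtain ⟨⟨w, w', p⟩, ⟨hw, hw', hp, hpD⟩, hΦx, hux⟩ :=
    ((mem_closure_iff_frequently.1 hx₀).and_eventually hev).exists
  -- All the approximants lie in a common `S n`, by monotonicity.
  have hevn : ∀ b ∈ D, ∀ᶠ n in Filter.atTop, b ∈ S n := by
    intro b hb
    obtain ⟨m, hm⟩ := Set.mem_iUnion.1 hb
    filter_upwards [Filter.eventually_ge_atTop m] with n hn using hmono hn hm
  obtain ⟨n, hwn, hwn', hpn⟩ := ((Filter.eventually_all.2 fun i => hevn _ (hw i trivial)).and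
    ((Filter.eventually_all.2 fun i => hevn _ (hw' i trivial)).and (hevn _ hpD))).exists
  have := hclosed n
  let W : Fin k → S n := fun i => ⟨w i, hwn i⟩
  let W' : Fin k → S n := fun i => ⟨w' i, hwn' i⟩
  let P : S n := ⟨p, hpn⟩
  let U : S n := ∑ j, W j * P * W' j
  have hUu : (U : B) = u (w, w', p) := by
    simp [U, u, W, W', P]
  have hUnit : IsUnit U := by
    have h1 : ‖1 - U‖ < 1 := by
      have : ‖1 - U‖ = ‖1 - (U : B)‖ := rfl
      rw [this, hUu]
      exact hux
    simpa using isUnit_one_sub_of_norm_lt_one h1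
  obtain ⟨V, hV⟩ := hUnit
  let c : S n := ((V⁻¹ : (S n)ˣ) : S n)
  have hUc : U * c = 1 := by rw [← hV]; exact V.mul_inv
  have hinvc : Ring.inverse (u (w, w', p)) = (c : B) := by
    rw [← hUu, ← hV]
    exact Ring.inverse_unit (Units.map ((S n).subtype : S n →* B) V)
  have hPP : P * P = P := Subtype.ext hp
  have hmain := entries_eq_of_norm_lt w w' p c hp
    (by rw [show ∑ j, w j * p * w' j = (U : B) from hUu.symm]; exact congrArg Subtype.val hUc)
    (by rw [← hinvc]; exact hΦx)
  obtain ⟨φ⟩ := hB n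
  refine ⟨n, dvd_of_matrix_units
    (φ.toAlgEquiv : (S n) →ₐ[ℂ] Matrix (Fin (kB n)) (Fin (kB n)) ℂ) W W' P c hPP hUc fun j => ?_⟩
  apply Subtype.ext
  have := hmain j j
  rw [if_pos rfl] at this
  exact this.symm

/-- Let `A` and `B` be separable unital UHF algebras, realized as closures of increasing
unital matrix subalgebras `SA n ≅ M_{kA n}(ℂ)` and `SB n ≅ M_{kB n}(ℂ)`, with associated
supernatural numbers `s : p ↦ ⨆ n, v_p(kA n)` and `t : p ↦ ⨆ n, v_p(kB n)`.  If `A`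
embeds unitally into `B` then `s` divides `t`; in particular, if `M_p(ℂ)` embeds
unitally into `B` for a prime `p`, then `p` divides the supernatural number of `B`. -/
theorem supernatural_divides_of_unital_embedding
    (A B : Type*) [CStarAlgebra A] [CStarAlgebra B]
    [TopologicalSpace.SeparableSpace A] [TopologicalSpace.SeparableSpace B]
    (SA : ℕ → StarSubalgebra ℂ A) (SB : ℕ → StarSubalgebra ℂ B)
    (hmonoA : Monotone SA) (hmonoB : Monotone SB)
    (kA kB : ℕ → ℕ) (hkA : ∀ n, 0 < kA n) (hkB : ∀ n, 0 < kB n)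
    (hA : ∀ n, Nonempty ((SA n) ≃⋆ₐ[ℂ] Matrix (Fin (kA n)) (Fin (kA n)) ℂ))
    (hB : ∀ n, Nonempty ((SB n) ≃⋆ₐ[ℂ] Matrix (Fin (kB n)) (Fin (kB n)) ℂ))
    (hdenseA : Dense (⋃ n, (SA n : Set A))) (hdenseB : Dense (⋃ n, (SB n : Set B))) :
    (∀ f : A →⋆ₐ[ℂ] B, Function.Injective f →
      ∀ p : ℕ, p.Prime →
        (⨆ n, ((kA n).factorization p : ℕ∞)) ≤ ⨆ n, ((kB n).factorization p : ℕ∞)) ∧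
    (∀ p : ℕ, p.Prime →
      ∀ g : Matrix (Fin p) (Fin p) ℂ →⋆ₐ[ℂ] B, Function.Injective g →
        1 ≤ ⨆ n, ((kB n).factorization p : ℕ∞)) := by
  have key : ∀ {k : ℕ} (_ : 0 < k) (g : Matrix (Fin k) (Fin k) ℂ →⋆ₐ[ℂ] B) (p : ℕ),
      (k.factorization p : ℕ∞) ≤ ⨆ n, ((kB n).factorization p : ℕ∞) := by
    intro k hk g p
    obtain ⟨n, hn⟩ := exists_dvd_of_hom SB hmonoB kB hB hdenseB hk g
    refine le_iSup_of_le n ?_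
    exact_mod_cast (Nat.factorization_le_iff_dvd hk.ne' (hkB n).ne').2 hn p
  refine ⟨fun f _ p _ => iSup_le fun n => ?_, fun p hp g _ => ?_⟩
  · obtain ⟨e⟩ := hA n
    exact key (hkA n) ((f.comp (SA n).subtype).comp
      (e.symm : Matrix (Fin (kA n)) (Fin (kA n)) ℂ →⋆ₐ[ℂ] SA n)) p
  · simpa [hp.factorization_self] using key hp.pos g p
end

section
/- Let (p_n) be a sequence of pairwise-orthogonal projections in the multiplier algebra M(B) of a C*-algebra B such that the partial sums e_m = Σ_{n≤m} p_n converge strictly, and let α_n : A_n → B be *-homomorphisms with α_n(1_{A_n}) = p_n, where each A_n is a unital C*-algebra. Then there is a unique strictly continuous *-homomorphism α : ∏ A_n → M(B) with α ∘ j_n = α_n for every n, where j_n : A_n → ⊕ A_m is the canonical embedding. -/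
/-!
Write `q n = α n 1`.  Orthogonality of the `q n` makes each finite sum
`F s : x ↦ ∑ n ∈ s, α n (x n)` a *-homomorphism `∏ A n → B`, hence contractive (`finHom`,
`norm_finHom_le`).  Since `F s x * b = F s x * ∑ n ∈ s, q n * b`, strict convergence of `∑ q n`
forces `F (range N) x * b` to converge for all `x` and `b`.  The limits are the left action of
`Φ x`; the right action is obtained by conjugating with the involution (`exists_hom`).

Strict continuity on all of `∏ A n`, and not merely on bounded sets, requires for every `b` one
`a ∈ ⊕ A n` with `‖Φ x b‖ ≤ C ‖x a‖`.  An Abel summation (`exists_weight`) yields scalars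
`w n > 0` tending to zero for which the partial sums of `∑ (w n)⁻¹ q n b` remain bounded.  Then
`a = (w n • 1)` works, because `F s x * b = F s (x a) * ∑ n ∈ s, (w n)⁻¹ q n b`
(`exists_strict_bound`).

For uniqueness, the truncations of `x` converge strictly to `x` (`tendsto_truncation`), so any
strictly continuous extension of the `α n` acts on `B` by the limits of `F (range N) x`.
-/


open Filter Topology MeasureTheory
open scoped ENNReal MultiplierAlgebra

/-- The strict topology on the multiplier algebra `𝓜(ℂ, B)`: the initial topology with
respect to the maps `T ↦ T b` and `T ↦ b T` into `B` (`b ∈ B`). -/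
noncomputable def strictTopM (B : Type*) [NonUnitalCStarAlgebra B] :
    TopologicalSpace 𝓜(ℂ, B) :=
  ⨅ b : B, (TopologicalSpace.induced (fun T : 𝓜(ℂ, B) => T.fst b) inferInstance ⊓
    TopologicalSpace.induced (fun T : 𝓜(ℂ, B) => T.snd b) inferInstance)

/-- The strict topology on the bounded product `∏ A n = lp A ∞`, viewed as the
multiplier algebra of `⊕ A n`: initial topology with respect to the maps
`x ↦ x * a` and `x ↦ a * x` for `a ∈ ⊕ A n`. -/
noncomputable def strictTopProd (A : ℕ → Type*) [∀ n, CStarAlgebra (A n)]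
    [∀ n, Nontrivial (A n)] : TopologicalSpace (lp A ∞) :=
  ⨅ a : {a : lp A ∞ // Tendsto (fun n => ‖a n‖) atTop (𝓝 0)},
    (TopologicalSpace.induced (fun x : lp A ∞ => x * a.1) inferInstance ⊓
      TopologicalSpace.induced (fun x : lp A ∞ => a.1 * x) inferInstance)

namespace StrictHom

/-! ### Rescaling the increments of a null sequence -/

/-- The norms of a null sequence are dominated by the squares of an antitone, positive null
sequence. -/
lemma exists_antitone_majorant {E : Type*} [NormedAddCommGroup E] (t : ℕ → E)
    (ht : Tendsto t atTop (𝓝 0)) :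
    ∃ w : ℕ → ℝ, Antitone w ∧ (∀ n, 0 < w n) ∧ Tendsto w atTop (𝓝 0) ∧
      ∀ n, ‖t n‖ ≤ w n ^ 2 := by
  have ht' : Tendsto (fun n => ‖t n‖) atTop (𝓝 0) := by simpa using ht.norm
  have hbdd : ∀ n, BddAbove (Set.range fun k => ‖t (n + k)‖) := fun n =>
    ht'.bddAbove_range.mono (by rintro _ ⟨k, rfl⟩; exact ⟨n + k, rfl⟩)
  set u : ℕ → ℝ := fun n => ⨆ k, ‖t (n + k)‖ with hu
  have hu0 : ∀ n, 0 ≤ u n := fun n => Real.iSup_nonneg fun k => norm_nonneg _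
  have hanti : Antitone u := by
    refine antitone_nat_of_succ_le fun n => ciSup_le fun k => ?_
    have := le_ciSup (hbdd n) (1 + k)
    simpa [add_assoc] using this
  have hlim : Tendsto u atTop (𝓝 0) := by
    rw [Metric.tendsto_atTop]
    intro ε hε
    obtain ⟨N, hN⟩ := (Metric.tendsto_atTop.1 ht') (ε / 2) (half_pos hε)
    refine ⟨N, fun n hn => ?_⟩
    have : u n ≤ ε / 2 := ciSup_le fun k => by
      have := hN (n + k) (by omega)
      simp at this
      exact this.le
    rw [Real.dist_eq, sub_zero, abs_of_nonneg (hu0 n)]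
    linarith
  have hpos : ∀ n, 0 < u n + 1 / ((n : ℝ) + 1) := fun n =>
    add_pos_of_nonneg_of_pos (hu0 n) (by positivity)
  refine ⟨fun n => √(u n + 1 / ((n : ℝ) + 1)), ?_, fun n => Real.sqrt_pos.2 (hpos n), ?_, ?_⟩
  · intro m n h
    refine Real.sqrt_le_sqrt (add_le_add (hanti h) ?_)
    have : (m : ℝ) ≤ n := by exact_mod_cast h
    gcongr
  · have := (hlim.add tendsto_one_div_add_atTop_nhds_zero_nat).sqrt
    simpa using this
  · intro n
    rw [Real.sq_sqrt (hpos n).le]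
    have h1 : ‖t n‖ ≤ u n := by simpa using le_ciSup (hbdd n) 0
    have h2 : (0 : ℝ) < 1 / ((n : ℝ) + 1) := by positivity
    linarith

/-- Given a null sequence `t`, its increments can be rescaled by factors tending to infinity in
such a way that the partial sums stay bounded.  The proof is an Abel summation. -/
lemma exists_weight {E : Type*} [NormedAddCommGroup E] [NormedSpace ℝ E] (t : ℕ → E)
    (ht : Tendsto t atTop (𝓝 0)) :
    ∃ w : ℕ → ℝ, (∀ n, 0 < w n) ∧ Tendsto w atTop (𝓝 0) ∧
      ∃ C : ℝ, 0 ≤ C ∧ ∀ N, ‖∑ n ∈ Finset.range N, (w n)⁻¹ • (t (n + 1) - t n)‖ ≤ C := by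
  obtain ⟨w, hanti, hpos, hlim, hle⟩ := exists_antitone_majorant t ht
  have hend : ∀ N, ‖(w N)⁻¹ • t N‖ ≤ w N := fun N => by
    rw [norm_smul, Real.norm_of_nonneg (inv_nonneg.2 (hpos N).le), inv_mul_le_iff₀ (hpos N), ← sq]
    exact hle N
  have key : ∀ N, ‖(∑ n ∈ Finset.range N, (w n)⁻¹ • (t (n + 1) - t n)) - (w N)⁻¹ • t N‖
      ≤ 2 * w 0 - w N := by
    intro N
    induction N with
    | zero => simpa [two_mul] using hend 0
    | succ N ih =>
      have h1 : (∑ n ∈ Finset.range (N + 1), (w n)⁻¹ • (t (n + 1) - t n))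
            - (w (N + 1))⁻¹ • t (N + 1)
          = ((∑ n ∈ Finset.range N, (w n)⁻¹ • (t (n + 1) - t n)) - (w N)⁻¹ • t N)
            - ((w (N + 1))⁻¹ - (w N)⁻¹) • t (N + 1) := by
        rw [Finset.sum_range_succ]; module
      have ha := hpos N
      have hb := hpos (N + 1)
      have hab : w (N + 1) ≤ w N := hanti (Nat.le_succ N)
      have h2 : ‖((w (N + 1))⁻¹ - (w N)⁻¹) • t (N + 1)‖ ≤ w N - w (N + 1) := by
        have h0 : 0 ≤ (w (N + 1))⁻¹ - (w N)⁻¹ := sub_nonneg.2 (inv_anti₀ hb hab)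
        rw [norm_smul, Real.norm_of_nonneg h0]
        calc ((w (N + 1))⁻¹ - (w N)⁻¹) * ‖t (N + 1)‖
            ≤ ((w (N + 1))⁻¹ - (w N)⁻¹) * w (N + 1) ^ 2 := by gcongr; exact hle _
          _ = (w N - w (N + 1)) * (w (N + 1) / w N) := by field_simp
          _ ≤ (w N - w (N + 1)) * 1 := by
              refine mul_le_mul_of_nonneg_left ?_ (sub_nonneg.2 hab)
              exact (div_le_one ha).2 hab
          _ = _ := mul_one _
      rw [h1]
      have := norm_sub_le ((∑ n ∈ Finset.range N, (w n)⁻¹ • (t (n + 1) - t n)) - (w N)⁻¹ • t N)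
        (((w (N + 1))⁻¹ - (w N)⁻¹) • t (N + 1))
      linarith
  refine ⟨w, hpos, hlim, 2 * w 0, by linarith [hpos 0], fun N => ?_⟩
  have := norm_add_le ((∑ n ∈ Finset.range N, (w n)⁻¹ • (t (n + 1) - t n)) - (w N)⁻¹ • t N)
    ((w N)⁻¹ • t N)
  rw [sub_add_cancel] at this
  linarith [key N, hend N]

/-! ### Finite sums of orthogonal *-homomorphisms -/

variable {A : ℕ → Type*} [∀ n, CStarAlgebra (A n)] {B : Type*} [NonUnitalCStarAlgebra B]

lemma hom_mul_hom_eq_zero {α : ∀ n, A n →⋆ₙₐ[ℂ] B}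
    (horth : ∀ n m, n ≠ m → α n 1 * α m 1 = 0) {n m : ℕ} (h : n ≠ m) (a : A n) (b : A m) :
    α n a * α m b = 0 := by
  rw [← mul_one a, ← one_mul b, map_mul, map_mul, mul_assoc, ← mul_assoc (α n 1), horth n m h,
    zero_mul, mul_zero]

/-- The *-homomorphism `x ↦ ∑ n ∈ s, α n (x n)` attached to a finite set `s` of indices. -/
noncomputable def finHom (α : ∀ n, A n →⋆ₙₐ[ℂ] B)
    (horth : ∀ n m, n ≠ m → α n 1 * α m 1 = 0) (s : Finset ℕ) : lp A ∞ →⋆ₙₐ[ℂ] B where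
  toFun x := ∑ n ∈ s, α n (x n)
  map_smul' c x := by simp [Finset.smul_sum]
  map_zero' := by simp
  map_add' x y := by simp [Finset.sum_add_distrib]
  map_mul' x y := by
    rw [Finset.sum_mul_sum]
    refine Finset.sum_congr rfl fun n hn => ?_
    rw [Finset.sum_eq_single_of_mem n hn fun m _ hm => hom_mul_hom_eq_zero horth hm.symm _ _,
      lp.infty_coeFn_mul, Pi.mul_apply, map_mul]
  map_star' x := by simp [star_sum, map_star]

variable {α : ∀ n, A n →⋆ₙₐ[ℂ] B} (horth : ∀ n m, n ≠ m → α n 1 * α m 1 = 0)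

lemma finHom_apply (s : Finset ℕ) (x : lp A ∞) : finHom α horth s x = ∑ n ∈ s, α n (x n) := rfl

lemma norm_finHom_le (s : Finset ℕ) (x : lp A ∞) : ‖finHom α horth s x‖ ≤ ‖x‖ :=
  NonUnitalStarAlgHom.norm_apply_le _ _

/-- Weights may be moved between the two factors, as the summands are mutually orthogonal. -/
lemma finHom_mul_weighted (s : Finset ℕ) (x y : lp A ∞) (w : ℕ → ℝ)
    (h : ∀ n ∈ s, w n • y n = x n) (b : B) :
    finHom α horth s y * ∑ n ∈ s, w n • (α n 1 * b) = finHom α horth s x * b := by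
  simp only [finHom_apply, Finset.sum_mul]
  refine Finset.sum_congr rfl fun n hn => ?_
  rw [Finset.mul_sum, Finset.sum_eq_single_of_mem n hn]
  · rw [mul_smul_comm, ← mul_assoc, ← map_mul, mul_one, ← smul_mul_assoc, ← h n hn]
    congr 1
    have := map_smul (α n) (w n : ℂ) (y n)
    simpa using this.symm
  · intro m _ hm
    rw [mul_smul_comm, ← mul_assoc, hom_mul_hom_eq_zero horth hm.symm, zero_mul, smul_zero]

/-- The series `∑ α n (x n) * b` is Cauchy: on a block of indices its increments are controlled
by those of `∑ α n 1 * b`. -/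
lemma exists_tendsto_finHom_mul
    (hconv : ∀ b : B, ∃ l, Tendsto (fun N => ∑ n ∈ Finset.range N, α n 1 * b) atTop (𝓝 l))
    (x : lp A ∞) (b : B) :
    ∃ l, Tendsto (fun N => finHom α horth (Finset.range N) x * b) atTop (𝓝 l) := by
  apply cauchySeq_tendsto_of_complete
  obtain ⟨l, hl⟩ := hconv b
  have hc := hl.cauchySeq
  rw [Metric.cauchySeq_iff'] at hc ⊢
  intro ε hε
  obtain ⟨N, hN⟩ := hc (ε / (‖x‖ + 1)) (by positivity)
  refine ⟨N, fun n hn => ?_⟩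
  have h1 : finHom α horth (Finset.range n) x * b - finHom α horth (Finset.range N) x * b
      = finHom α horth (Finset.Ico N n) x * ∑ k ∈ Finset.Ico N n, (1 : ℝ) • (α k 1 * b) := by
    rw [finHom_mul_weighted horth _ x x (fun _ => 1) (by simp), ← sub_mul]
    simp only [finHom_apply, Finset.sum_Ico_eq_sub _ hn]
  have h2 := hN n hn
  rw [dist_eq_norm, ← Finset.sum_Ico_eq_sub _ hn] at h2
  simp only [one_smul] at h1
  rw [dist_eq_norm, h1]
  calc _ ≤ ‖x‖ * ‖∑ k ∈ Finset.Ico N n, α k 1 * b‖ :=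
        (norm_mul_le _ _).trans (by gcongr; exact norm_finHom_le _ _ _)
    _ ≤ ‖x‖ * (ε / (‖x‖ + 1)) := by gcongr
    _ < ε := by
      rw [mul_div_assoc', div_lt_iff₀ (by positivity)]
      nlinarith [norm_nonneg x]

/-- The element `(w n • 1)` of `∏ A n` attached to a null sequence `w`. -/
noncomputable def scalarSeq (A : ℕ → Type*) [∀ n, CStarAlgebra (A n)] [∀ n, Nontrivial (A n)]
    (w : ℕ → ℝ) (hw : Tendsto w atTop (𝓝 0)) : lp A ∞ :=
  ⟨fun n => w n • 1, memℓp_infty <| by simpa [norm_smul] using hw.norm.bddAbove_range⟩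

lemma scalarSeq_apply [∀ n, Nontrivial (A n)] (w : ℕ → ℝ) (hw : Tendsto w atTop (𝓝 0)) (n : ℕ) :
    scalarSeq A w hw n = w n • (1 : A n) := rfl

/-- The estimate behind strict continuity: for each `b` a single `a ∈ ⊕ A n` satisfies
`‖Φ x b‖ ≤ C ‖x a‖`.  It plays the role of the factorization `e b = α(a) c`. -/
lemma exists_strict_bound [∀ n, Nontrivial (A n)]
    (hconv : ∀ b : B, ∃ l, Tendsto (fun N => ∑ n ∈ Finset.range N, α n 1 * b) atTop (𝓝 l))
    (b : B) :
    ∃ a : lp A ∞, Tendsto (fun n => ‖a n‖) atTop (𝓝 0) ∧ star a = a ∧ ∃ C : ℝ, 0 ≤ C ∧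
      ∀ (x : lp A ∞) (N : ℕ), ‖finHom α horth (Finset.range N) x * b‖ ≤ C * ‖x * a‖ := by
  obtain ⟨l, hl⟩ := hconv b
  have ht : Tendsto (fun N => (∑ n ∈ Finset.range N, α n 1 * b) - l) atTop (𝓝 0) := by
    simpa using hl.sub_const l
  obtain ⟨w, hpos, hw, C, hC, hbd⟩ := exists_weight _ ht
  simp only [Finset.sum_range_succ, sub_sub_sub_cancel_right, add_sub_cancel_left] at hbd
  refine ⟨scalarSeq A w hw, ?_, ?_, C, hC, fun x N => ?_⟩
  · simpa [scalarSeq_apply, norm_smul] using hw.norm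
  · ext n
    simp [scalarSeq_apply]
  · rw [← finHom_mul_weighted horth _ x (x * scalarSeq A w hw) (fun n => (w n)⁻¹)]
    · calc _ ≤ ‖x * scalarSeq A w hw‖ * C :=
            (norm_mul_le _ _).trans (by
              gcongr
              · exact norm_finHom_le _ _ _
              · exact hbd N)
        _ = _ := mul_comm _ _
    · intro n _
      rw [lp.infty_coeFn_mul, Pi.mul_apply, scalarSeq_apply, mul_smul_comm, mul_one,
        inv_smul_smul₀ (hpos n).ne']

/-! ### The limit homomorphism -/

/-- The left and right actions on `B` given by the pointwise limits of `finHom` fit together to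
a *-homomorphism into the multiplier algebra. -/
lemma exists_hom
    (hconv : ∀ b : B, ∃ l, Tendsto (fun N => ∑ n ∈ Finset.range N, α n 1 * b) atTop (𝓝 l)) :
    ∃ Φ : lp A ∞ →⋆ₙₐ[ℂ] 𝓜(ℂ, B), ∀ x b,
      Tendsto (fun N => finHom α horth (Finset.range N) x * b) atTop (𝓝 ((Φ x).fst b)) := by
  choose L hL using exists_tendsto_finHom_mul horth hconv
  have hbd : ∀ x b, ‖L x b‖ ≤ ‖x‖ * ‖b‖ := fun x b =>
    le_of_tendsto (hL x b).norm <| Eventually.of_forall fun N =>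
      (norm_mul_le _ _).trans (by gcongr; exact norm_finHom_le _ _ _)
  have hadd : ∀ x b c, L x (b + c) = L x b + L x c := fun x b c =>
    tendsto_nhds_unique (hL x (b + c)) (by simpa [mul_add] using (hL x b).add (hL x c))
  have hsmul : ∀ (z : ℂ) x b, L x (z • b) = z • L x b := fun z x b =>
    tendsto_nhds_unique (hL x (z • b)) (by simpa [mul_smul_comm] using (hL x b).const_smul z)
  have hadd' : ∀ x y b, L (x + y) b = L x b + L y b := fun x y b =>
    tendsto_nhds_unique (hL (x + y) b) (by simpa [add_mul] using (hL x b).add (hL y b))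
  have hsmul' : ∀ (z : ℂ) x b, L (z • x) b = z • L x b := fun z x b =>
    tendsto_nhds_unique (hL (z • x) b) (by simpa [smul_mul_assoc] using (hL x b).const_smul z)
  have hmul' : ∀ x y b, L (x * y) b = L x (L y b) := by
    intro x y b
    refine tendsto_nhds_unique (hL (x * y) b) ?_
    -- `F x * F y * b = F x * (F y * b - L y b) + F x * L y b`, and `F x` stays bounded
    have h1 : Tendsto (fun N => finHom α horth (Finset.range N) x *
        (finHom α horth (Finset.range N) y * b - L y b)) atTop (𝓝 0) := by
      have h0 : Tendsto (fun N => ‖x‖ * ‖finHom α horth (Finset.range N) y * b - L y b‖)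
          atTop (𝓝 0) := by
        simpa using ((hL y b).sub_const (L y b)).norm.const_mul ‖x‖
      refine squeeze_zero_norm (fun N => (norm_mul_le _ _).trans ?_) h0
      gcongr
      exact norm_finHom_le _ _ _
    have h2 := h1.add (hL x (L y b))
    simpa [mul_sub, mul_assoc] using h2
  let Lc : lp A ∞ → B →L[ℂ] B := fun x =>
    LinearMap.mkContinuous ⟨⟨L x, hadd x⟩, fun z b => hsmul z x b⟩ ‖x‖ (hbd x)
  let Rc : lp A ∞ → B →L[ℂ] B := fun x =>
    LinearMap.mkContinuous ⟨⟨fun b => star (L (star x) (star b)), fun b c => by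
      simp [hadd]⟩, fun z b => by simp [hsmul]⟩ ‖x‖
      (fun b => by simpa using hbd (star x) (star b))
  have hLc : ∀ x b, Lc x b = L x b := fun _ _ => rfl
  have hRc : ∀ x b, Rc x b = star (L (star x) (star b)) := fun _ _ => rfl
  have hcentral : ∀ x b c, Rc x b * c = b * Lc x c := by
    intro x b c
    have h1 := (hL (star x) (star b)).star.mul_const c
    have h2 := (hL x c).const_mul b
    refine tendsto_nhds_unique h1 (h2.congr fun N => ?_)
    simp [map_star, mul_assoc]
  refine ⟨{ toFun := fun x => ⟨(Lc x, Rc x), hcentral x⟩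
            map_smul' := fun z x => ?_
            map_zero' := ?_
            map_add' := fun x y => ?_
            map_mul' := fun x y => ?_
            map_star' := fun x => ?_ }, fun x b => hL x b⟩
  · refine DoubleCentralizer.ext _ _ _ _ (Prod.ext ?_ ?_) <;> ext b
    · exact hsmul' z x b
    · change star (L (star (z • x)) (star b)) = z • star (L (star x) (star b))
      simp [hsmul']
  · have h0 : ∀ b, L 0 b = 0 := fun b => by simpa using hsmul' 0 0 b
    refine DoubleCentralizer.ext _ _ _ _ (Prod.ext ?_ ?_) <;> ext b
    · exact h0 b
    · change star (L (star 0) (star b)) = 0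
      simp [h0]
  · refine DoubleCentralizer.ext _ _ _ _ (Prod.ext ?_ ?_) <;> ext b
    · exact hadd' x y b
    · change star (L (star (x + y)) (star b)) = star (L (star x) (star b)) +
        star (L (star y) (star b))
      simp [hadd']
  · refine DoubleCentralizer.ext _ _ _ _ (Prod.ext ?_ ?_) <;> ext b
    · exact hmul' x y b
    · change star (L (star (x * y)) (star b)) =
        star (L (star y) (star (star (L (star x) (star b)))))
      simp [hmul']
  · refine DoubleCentralizer.ext _ _ _ _ (Prod.ext ?_ ?_) <;> ext b
    · change L (star x) b = star (star (L (star x) (star (star b))))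
      simp
    · change star (L (star (star x)) (star b)) = star (L x (star b))
      simp

/-! ### Strict continuity -/

/-- An additive map dominated in norm by another additive map `g` is continuous for the topology
induced by `g`. -/
lemma continuous_induced_of_bound {G E E' : Type*} [AddCommGroup G] [NormedAddCommGroup E]
    [NormedAddCommGroup E'] (f : G →+ E) (g : G →+ E') (C : ℝ) (h : ∀ x, ‖f x‖ ≤ C * ‖g x‖) :
    @Continuous _ _ (TopologicalSpace.induced g inferInstance) inferInstance f := by
  let _ : TopologicalSpace G := TopologicalSpace.induced g inferInstance
  have hg : Continuous g := continuous_induced_dom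
  rw [continuous_iff_continuousAt]
  intro x
  have h1 : Tendsto (fun y => C * ‖g y - g x‖) (𝓝 x) (𝓝 0) := by
    have := ((hg.tendsto x).sub_const (g x)).norm.const_mul C
    simpa using this
  refine tendsto_iff_norm_sub_tendsto_zero.2 (squeeze_zero (fun _ => norm_nonneg _) (fun y => ?_) h1)
  simpa using h (y - x)

lemma strictTopProd_le_right [∀ n, Nontrivial (A n)] (a : lp A ∞)
    (ha : Tendsto (fun n => ‖a n‖) atTop (𝓝 0)) :
    strictTopProd A ≤ TopologicalSpace.induced (fun x : lp A ∞ => x * a) inferInstance :=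
  (iInf_le _ (⟨a, ha⟩ : {a : lp A ∞ // Tendsto (fun n => ‖a n‖) atTop (𝓝 0)})).trans inf_le_left

lemma strictTopProd_le_left [∀ n, Nontrivial (A n)] (a : lp A ∞)
    (ha : Tendsto (fun n => ‖a n‖) atTop (𝓝 0)) :
    strictTopProd A ≤ TopologicalSpace.induced (fun x : lp A ∞ => a * x) inferInstance :=
  (iInf_le _ (⟨a, ha⟩ : {a : lp A ∞ // Tendsto (fun n => ‖a n‖) atTop (𝓝 0)})).trans inf_le_right

lemma snd_apply_eq (Φ : lp A ∞ →⋆ₙₐ[ℂ] 𝓜(ℂ, B)) (x : lp A ∞) (b : B) :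
    (Φ x).snd b = star ((Φ (star x)).fst (star b)) := by
  rw [map_star Φ, DoubleCentralizer.star_fst, star_star, star_star]

lemma continuous_strict [∀ n, Nontrivial (A n)]
    (hconv : ∀ b : B, ∃ l, Tendsto (fun N => ∑ n ∈ Finset.range N, α n 1 * b) atTop (𝓝 l))
    (Φ : lp A ∞ →⋆ₙₐ[ℂ] 𝓜(ℂ, B))
    (hΦ : ∀ x b,
      Tendsto (fun N => finHom α horth (Finset.range N) x * b) atTop (𝓝 ((Φ x).fst b))) :
    @Continuous _ _ (strictTopProd A) (strictTopM B) Φ := by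
  have hbound : ∀ b : B, ∃ a : lp A ∞, Tendsto (fun n => ‖a n‖) atTop (𝓝 0) ∧ star a = a ∧
      ∃ C : ℝ, ∀ x, ‖(Φ x).fst b‖ ≤ C * ‖x * a‖ := by
    intro b
    obtain ⟨a, ha, hsa, C, -, h⟩ := exists_strict_bound horth hconv b
    exact ⟨a, ha, hsa, C, fun x => le_of_tendsto (hΦ x b).norm (Eventually.of_forall (h x))⟩
  unfold strictTopM
  refine continuous_iInf_rng.2 fun b => continuous_inf_rng.2
    ⟨continuous_induced_rng.2 ?_, continuous_induced_rng.2 ?_⟩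
  · obtain ⟨a, ha, -, C, h⟩ := hbound b
    refine continuous_le_dom (strictTopProd_le_right a ha) ?_
    exact continuous_induced_of_bound
      (AddMonoidHom.mk' (fun x => (Φ x).fst b) fun x y => by simp)
      (AddMonoidHom.mulRight a) C h
  · obtain ⟨a, ha, hsa, C, h⟩ := hbound (star b)
    refine continuous_le_dom (strictTopProd_le_left a ha) ?_
    refine continuous_induced_of_bound
      (AddMonoidHom.mk' (fun x => (Φ x).snd b) fun x y => by simp)
      (AddMonoidHom.mulLeft a) C fun x => ?_
    change ‖(Φ x).snd b‖ ≤ C * ‖a * x‖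
    have := h (star x)
    rwa [← norm_star (star x * a), star_mul, star_star, hsa, ← norm_star, ← snd_apply_eq] at this

/-! ### Strict density of the finite sequences -/

lemma tendsto_nhds_inf {ι X : Type*} {l : Filter ι} {f : ι → X} {x : X}
    {t₁ t₂ : TopologicalSpace X} (h₁ : Tendsto f l (@nhds X t₁ x))
    (h₂ : Tendsto f l (@nhds X t₂ x)) : Tendsto f l (@nhds X (t₁ ⊓ t₂) x) := by
  rw [@nhds_inf X t₁ t₂ x]
  exact tendsto_inf.2 ⟨h₁, h₂⟩

lemma tendsto_nhds_induced {ι X Y : Type*} {l : Filter ι} {f : ι → X} {x : X}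
    [t : TopologicalSpace Y] {g : X → Y} (h : Tendsto (g ∘ f) l (𝓝 (g x))) :
    Tendsto f l (@nhds X (t.induced g) x) := by
  rw [nhds_induced]
  exact tendsto_comap_iff.2 h

/-- Truncations converge strictly to the full sequence, so the finitely supported sequences are
strictly dense in `∏ A n`. -/
lemma tendsto_truncation [∀ n, Nontrivial (A n)] (x : lp A ∞) :
    Tendsto (fun N => ∑ n ∈ Finset.range N, lp.single ∞ n (x n)) atTop
      (@nhds _ (strictTopProd A) x) := by
  have hcoe : ∀ N k, (∑ n ∈ Finset.range N, lp.single ∞ n (x n) : lp A ∞) k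
      = if k < N then x k else 0 := by
    intro N k
    rw [lp.coeFn_sum, Finset.sum_apply]
    simp only [lp.coeFn_single, Finset.sum_pi_single, Finset.mem_range]
  have htail : ∀ N k, ‖(∑ n ∈ Finset.range N, lp.single ∞ n (x n) - x : lp A ∞) k‖
      ≤ if k < N then 0 else ‖x‖ := by
    intro N k
    rw [lp.coeFn_sub, Pi.sub_apply, hcoe]
    split_ifs
    · simp
    · simpa using lp.norm_apply_le_norm (by simp) x k
  unfold strictTopProd
  rw [nhds_iInf, tendsto_iInf]
  rintro ⟨a, ha⟩
  -- both products are small in each coordinate: the truncation error vanishes below `N`,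
  -- while `a` is small from `N` on
  have main : ∀ f : lp A ∞ → lp A ∞, (∀ y k, ‖f y k‖ ≤ ‖y k‖ * ‖a k‖) →
      (∀ y z, f y - f z = f (y - z)) →
      Tendsto (f ∘ fun N => ∑ n ∈ Finset.range N, lp.single ∞ n (x n)) atTop (𝓝 (f x)) := by
    intro f hf hsub
    rw [Metric.tendsto_atTop]
    intro ε hε
    obtain ⟨N, hN⟩ := (Metric.tendsto_atTop.1 ha) (ε / 2 / (‖x‖ + 1)) (by positivity)
    refine ⟨N, fun m hm => ?_⟩
    rw [Function.comp, dist_eq_norm, hsub]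
    refine (lp.norm_le_of_forall_le (half_pos hε).le fun k => (hf _ k).trans ?_).trans_lt
      (half_lt_self hε)
    have h1 := htail m k
    split_ifs at h1 with hk
    · have : ‖(∑ n ∈ Finset.range m, lp.single ∞ n (x n) - x : lp A ∞) k‖ = 0 :=
        le_antisymm h1 (norm_nonneg _)
      rw [this, zero_mul]; positivity
    · have h2 := hN k (by omega)
      simp only [dist_zero_right, norm_norm] at h2
      calc _ ≤ ‖x‖ * (ε / 2 / (‖x‖ + 1)) := by gcongr
        _ = ε / 2 * (‖x‖ / (‖x‖ + 1)) := by ring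
        _ ≤ ε / 2 * 1 := by
          gcongr
          exact (div_le_one (by positivity)).2 (by linarith)
        _ = _ := mul_one _
  refine tendsto_nhds_inf (tendsto_nhds_induced ?_) (tendsto_nhds_induced ?_)
  · exact main (fun y => y * a) (fun y k => norm_mul_le _ _) fun y z => (sub_mul _ _ _).symm
  · exact main (fun y => a * y) (fun y k => (norm_mul_le _ _).trans_eq (mul_comm _ _))
      fun y z => (mul_sub _ _ _).symm

/-- A strictly continuous extension of the `α n` acts on `B` by the limits of `finHom`. -/
lemma tendsto_of_continuous [∀ n, Nontrivial (A n)] (Ψ : lp A ∞ →⋆ₙₐ[ℂ] 𝓜(ℂ, B))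
    (hcont : @Continuous _ _ (strictTopProd A) (strictTopM B) Ψ)
    (hΨ : ∀ n (a : A n), Ψ (lp.single ∞ n a) = ((α n a : B) : 𝓜(ℂ, B))) (x : lp A ∞) (b : B) :
    Tendsto (fun N => finHom α horth (Finset.range N) x * b) atTop (𝓝 ((Ψ x).fst b)) := by
  have hle : strictTopM B ≤
      TopologicalSpace.induced (fun T : 𝓜(ℂ, B) => T.fst b) inferInstance :=
    (iInf_le _ b).trans inf_le_left
  have hb := continuous_induced_rng.1 (continuous_le_rng hle hcont)
  have h1 := (@Continuous.tendsto _ _ (strictTopProd A) _ _ hb x).comp (tendsto_truncation x)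
  refine h1.congr fun N => ?_
  simp only [Function.comp, map_sum, hΨ, finHom_apply, Finset.sum_mul]
  induction Finset.range N using Finset.induction_on with
  | empty => simp
  | insert n s hn ih => simp [Finset.sum_insert hn, ih]

end StrictHom

/-- Let `p n` be pairwise-orthogonal projections in `𝓜(B)` whose partial sums converge
strictly, and `α n : A n → B` *-homomorphisms with `α n 1 = p n`.  Then there is a
unique strictly continuous *-homomorphism `Φ : ∏ A n → 𝓜(B)` with `Φ ∘ j n = α n` for
every `n`, where `j n` is the canonical embedding of `A n` into `⊕ A m ⊆ ∏ A m`. -/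
theorem exists_unique_strict_hom_of_orthogonal_projections
    (A : ℕ → Type*) [∀ n, CStarAlgebra (A n)] [∀ n, Nontrivial (A n)]
    (B : Type*) [NonUnitalCStarAlgebra B]
    (p : ℕ → 𝓜(ℂ, B))
    (hsa : ∀ n, star (p n) = p n) (hidem : ∀ n, p n * p n = p n)
    (horth : ∀ n m, n ≠ m → p n * p m = 0)
    (hstrict : ∃ e : 𝓜(ℂ, B), ∀ b : B,
      Tendsto (fun m => ‖((∑ n ∈ Finset.range (m + 1), p n) - e).fst b‖) atTop (𝓝 0) ∧
      Tendsto (fun m => ‖((∑ n ∈ Finset.range (m + 1), p n) - e).snd b‖) atTop (𝓝 0))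
    (α : ∀ n, A n →⋆ₙₐ[ℂ] B)
    (hunit : ∀ n, ((α n 1 : B) : 𝓜(ℂ, B)) = p n) :
    ∃! Φ : lp A ∞ →⋆ₙₐ[ℂ] 𝓜(ℂ, B),
      @Continuous _ _ (strictTopProd A) (strictTopM B) Φ ∧
      ∀ n (a : A n), Φ (lp.single ∞ n a) = ((α n a : B) : 𝓜(ℂ, B)) := by
  have hco : ∀ b c : B, ((b * c : B) : 𝓜(ℂ, B)) = (b : 𝓜(ℂ, B)) * (c : 𝓜(ℂ, B)) := fun b c =>
    map_mul (DoubleCentralizer.coeHom (𝕜 := ℂ) (A := B)) b c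
  have horth' : ∀ n m, n ≠ m → α n 1 * α m 1 = 0 := by
    intro n m h
    have h0 : ((α n 1 * α m 1 : B) : 𝓜(ℂ, B)) = 0 := by
      rw [hco, hunit, hunit, horth n m h]
    -- `B` embeds faithfully into `𝓜(ℂ, B)`: evaluate at the adjoint and use the C*-identity
    have h1 : (α n 1 * α m 1) * star (α n 1 * α m 1) = 0 := by
      have := congrArg (fun T : 𝓜(ℂ, B) => T.fst (star (α n 1 * α m 1))) h0
      simpa [DoubleCentralizer.zero_fst] using this
    exact CStarRing.mul_star_self_eq_zero_iff _ |>.1 h1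
  have hconv : ∀ b : B, ∃ l,
      Tendsto (fun N => ∑ n ∈ Finset.range N, α n 1 * b) atTop (𝓝 l) := by
    intro b
    obtain ⟨e, he⟩ := hstrict
    refine ⟨e.fst b, (tendsto_add_atTop_iff_nat 1).1 ?_⟩
    refine tendsto_iff_norm_sub_tendsto_zero.2 ((he b).1.congr fun m => ?_)
    have : ∀ s : Finset ℕ, (∑ n ∈ s, p n).fst b = ∑ n ∈ s, α n 1 * b := by
      intro s
      induction s using Finset.induction_on with
      | empty => simp
      | insert n s hn ih =>
        simp [Finset.sum_insert hn, ih, ← hunit n]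
    rw [DoubleCentralizer.sub_fst, sub_apply, this]
  obtain ⟨Φ, hΦ⟩ := StrictHom.exists_hom horth' hconv
  refine ⟨Φ, ⟨StrictHom.continuous_strict horth' hconv Φ hΦ, fun n a => ?_⟩, ?_⟩
  · have hfst : ∀ (n : ℕ) (a : A n) (b : B), (Φ (lp.single ∞ n a)).fst b = α n a * b := by
      intro n a b
      refine tendsto_nhds_unique (hΦ _ b) (tendsto_const_nhds.congr' ?_)
      filter_upwards [eventually_gt_atTop n] with N hN
      rw [StrictHom.finHom_apply, Finset.sum_eq_single_of_mem n (Finset.mem_range.2 hN),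
        lp.single_apply_self]
      intro m _ hm
      rw [lp.single_apply_ne _ _ _ hm, map_zero]
    have hstar : star (lp.single ∞ n a) = lp.single ∞ n (star a) := by
      ext k
      rw [lp.star_apply]
      by_cases h : k = n
      · subst h; simp only [lp.single_apply_self]
      · rw [lp.single_apply_ne _ _ _ h, lp.single_apply_ne _ _ _ h, star_zero]
    refine DoubleCentralizer.ext _ _ _ _ (Prod.ext ?_ ?_) <;> ext b
    · simpa using hfst n a b
    · rw [StrictHom.snd_apply_eq, hstar, hfst, map_star]
      simp
  · rintro Ψ ⟨hcont, hΨ⟩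
    have hfst : ∀ x b, (Ψ x).fst b = (Φ x).fst b := fun x b =>
      tendsto_nhds_unique (StrictHom.tendsto_of_continuous horth' Ψ hcont hΨ x b) (hΦ x b)
    ext x : 1
    refine DoubleCentralizer.ext _ _ _ _ (Prod.ext ?_ ?_) <;> ext b
    · exact hfst x b
    · rw [StrictHom.snd_apply_eq, StrictHom.snd_apply_eq, hfst]
end
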